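/- arXiv:1909.10944 — 3 statements merged into one kernel-verified Lean document; each statement's English description precedes it below -/
import Mathlib

section
/- Let γ ∈ ℝ with γ ≠ 0, η > 0, and C₁, C₂ ∈ ℝ. Then the function p(x,t) := (C₂ − C₁·t + (C₁/γ)·log x)·exp(−γ·x/η) solves the Feller equation: for every x > 0 and every t ∈ ℝ, ∂ₜp(x,t) = ∂ₓ( x·(γ·p(x,t) + η·∂ₓp(x,t)) ). (This is the general solution invariant under the symmetry generator ξ₃.) -/
/-!
The weight `exp (-(γ x / η))` is annihilated by `γ + η ∂ₓ`, so multiplying it by a profile `f`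
leaves the flux `-η x f' exp (-(γ x / η))`. For `f = a + b log |x|` the factor `x f' = b` is
constant, the flux is a multiple of the weight itself, and its `x`-derivative is `γ b` times the
weight. This balances a profile that decreases in time at rate `C₁` exactly when `γ b = C₁`.
-/

/-- The flux `𝔉 = -x (γ u + η ∂ₓu)` of the Feller equation `∂ₜp + ∂ₓ𝔉 = 0`, for a density `u` at
a fixed time. It is the intended expression only where `u` is differentiable, `deriv` being `0`
elsewhere. -/
noncomputable def fellerFlux (γ η : ℝ) (u : ℝ → ℝ) (x : ℝ) : ℝ :=
  -(x * (γ * u x + η * deriv u x))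

theorem hasDerivAt_exp_neg_mul_div (γ η x : ℝ) :
    HasDerivAt (fun y => Real.exp (-(γ * y / η))) (-(γ / η) * Real.exp (-(γ * x / η))) x := by
  have exponent : HasDerivAt (fun y => -(γ * y / η)) (-(γ / η)) x := by
    simpa using (((hasDerivAt_id x).const_mul γ).div_const η).fun_neg
  simpa only [mul_comm] using exponent.exp

theorem hasDerivAt_const_add_mul_log_abs (a b : ℝ) {x : ℝ} (hx : x ≠ 0) :
    HasDerivAt (fun y => a + b * Real.log |y|) (b / x) x := by
  simpa only [Real.log_abs, div_eq_mul_inv] using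
    ((Real.hasDerivAt_log hx).const_mul b).const_add a

section Flux

variable {γ η x : ℝ}

theorem fellerFlux_mul_exp (hη : η ≠ 0) {f : ℝ → ℝ} {f' : ℝ} (hf : HasDerivAt f f' x) :
    fellerFlux γ η (fun y => f y * Real.exp (-(γ * y / η))) x =
      -(η * (x * f') * Real.exp (-(γ * x / η))) := by
  rw [fellerFlux, (hf.fun_mul (hasDerivAt_exp_neg_mul_div γ η x)).deriv]
  field_simp
  ring

theorem fellerFlux_log_mul_exp (hη : η ≠ 0) (a b : ℝ) (hx : x ≠ 0) :
    fellerFlux γ η (fun y => (a + b * Real.log |y|) * Real.exp (-(γ * y / η))) x =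
      -(η * b) * Real.exp (-(γ * x / η)) := by
  rw [fellerFlux_mul_exp hη (hasDerivAt_const_add_mul_log_abs a b hx), mul_div_cancel₀ b hx,
    neg_mul]

theorem hasDerivAt_fellerFlux_log_mul_exp (hη : η ≠ 0) (a b : ℝ) (hx : x ≠ 0) :
    HasDerivAt (fellerFlux γ η fun y => (a + b * Real.log |y|) * Real.exp (-(γ * y / η)))
      (γ * b * Real.exp (-(γ * x / η))) x := by
  have flux_eq_near_x :
      (fellerFlux γ η fun y => (a + b * Real.log |y|) * Real.exp (-(γ * y / η))) =ᶠ[nhds x]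
        fun y => -(η * b) * Real.exp (-(γ * y / η)) := by
    filter_upwards [isOpen_ne.mem_nhds hx] with y hy using fellerFlux_log_mul_exp hη a b hy
  have deriv_value : -(η * b) * (-(γ / η) * Real.exp (-(γ * x / η))) =
      γ * b * Real.exp (-(γ * x / η)) := by
    field_simp
  exact deriv_value ▸ ((hasDerivAt_exp_neg_mul_div γ η x).const_mul
    (-(η * b))).congr_of_eventuallyEq flux_eq_near_x

end Flux

theorem hasDerivAt_sub_mul_add_mul (a b c w t : ℝ) :
    HasDerivAt (fun τ => (a - b * τ + c) * w) (-(b * w)) t := by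
  simpa using ((((hasDerivAt_id t).const_mul b).const_sub a).add_const c).mul_const w

theorem feller_xi3_invariant_solution_general {γ η : ℝ} (hγ : γ ≠ 0) (hη : η ≠ 0)
    (C₁ C₂ : ℝ) (p : ℝ → ℝ → ℝ)
    (hp : ∀ x t, p x t =
      (C₂ - C₁ * t + (C₁ / γ) * Real.log |x|) * Real.exp (-(γ * x / η)))
    {x : ℝ} (hx : x ≠ 0) (t : ℝ) :
    deriv (fun τ => p x τ) t =
      deriv (fun y => y * (γ * p y t + η * deriv (fun z => p z t) y)) x := by
  have time_deriv : HasDerivAt (fun τ => p x τ) (-(C₁ * Real.exp (-(γ * x / η)))) t := by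
    simpa only [hp] using hasDerivAt_sub_mul_add_mul C₂ C₁ _ _ t
  have flux_deriv : HasDerivAt (fellerFlux γ η fun y => p y t)
      (C₁ * Real.exp (-(γ * x / η))) x := by
    simpa only [hp, mul_div_cancel₀ C₁ hγ] using
      hasDerivAt_fellerFlux_log_mul_exp (γ := γ) hη (C₂ - C₁ * t) (C₁ / γ) hx
  calc deriv (fun τ => p x τ) t = -(C₁ * Real.exp (-(γ * x / η))) := time_deriv.deriv
    _ = deriv (fun y => -fellerFlux γ η (fun z => p z t) y) x := flux_deriv.fun_neg.deriv.symm
    _ = deriv (fun y => y * (γ * p y t + η * deriv (fun z => p z t) y)) x := by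
      simp only [fellerFlux, neg_neg]

/-- The solutions of the Feller equation invariant under the symmetry generator ξ₃:
`p(x,t) = (C₂ − C₁·t + (C₁/γ)·log x)·exp(−γ·x/η)` satisfies
`∂ₜp = ∂ₓ( x·(γ·p + η·∂ₓp) )` for all `x > 0`, `t ∈ ℝ`. -/
theorem feller_xi3_invariant_solution (γ η : ℝ) (hγ : γ ≠ 0) (hη : 0 < η)
    (C₁ C₂ : ℝ) (p : ℝ → ℝ → ℝ)
    (hp : ∀ x t, p x t =
      (C₂ - C₁ * t + (C₁ / γ) * Real.log x) * Real.exp (-(γ * x / η))) :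
    ∀ x > 0, ∀ t : ℝ,
      deriv (fun τ => p x τ) t =
        deriv (fun y => y * (γ * p y t + η * deriv (fun z => p z t) y)) x :=
  fun _ hx t => feller_xi3_invariant_solution_general hγ hη.ne' C₁ C₂ p
    (by simpa only [Real.log_abs] using hp) hx.ne' t
end

section
/- Let γ ∈ ℝ with γ ≠ 0, η > 0, and C₁, C₂ ∈ ℝ. Then the function p(x,t) := (C₁ + C₂·t + (C₂/γ)·log x)·exp(γ·t) solves the Feller equation: for every x > 0 and every t ∈ ℝ, ∂ₜp(x,t) = ∂ₓ( x·(γ·p(x,t) + η·∂ₓp(x,t)) ). (This is the general solution invariant under the symmetry generator ξ₄.) -/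
/-!
At a fixed time `p` is affine in `log x`, so `x * ∂ₓp` does not depend on `x` and the diffusion term
`η * x * ∂ₓp` drops out of `∂ₓ(x * (γ * p + η * ∂ₓp))`, which becomes `γ * (p + x * ∂ₓp)`. In time,
the factor `exp (γ * t)` contributes `γ * p` to `∂ₜp`, and its coefficient, which grows at rate
`C₂`, contributes `C₂ * exp (γ * t) = γ * (x * ∂ₓp)`.
-/

open Filter Topology

theorem hasDerivAt_mul_exp_const_mul {A : ℝ → ℝ} {A' t : ℝ} (γ : ℝ) (hA : HasDerivAt A A' t) :
    HasDerivAt (fun τ => A τ * Real.exp (γ * τ)) ((A' + γ * A t) * Real.exp (γ * t)) t :=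
  (hA.mul ((hasDerivAt_id t).const_mul γ).exp).congr_deriv (by simp only [id]; ring)

theorem hasDerivAt_const_add_mul_log_mul_const (a b c : ℝ) {x : ℝ} (hx : x ≠ 0) :
    HasDerivAt (fun y => (a + b * Real.log y) * c) (b * c / x) x :=
  ((((Real.hasDerivAt_log hx).const_mul b).const_add a).mul_const c).congr_deriv (by ring)

theorem hasDerivAt_mul_add_deriv_of_hasDerivAt_div {f : ℝ → ℝ} {b x : ℝ} (γ η : ℝ)
    (hx : x ≠ 0) (hf : ∀ᶠ y in 𝓝 x, HasDerivAt f (b / y) y) :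
    HasDerivAt (fun y => y * (γ * f y + η * deriv f y)) (γ * (f x + b)) x := by
  have diffusion_const :
      (fun y => y * (γ * f y + η * deriv f y)) =ᶠ[𝓝 x] fun y => y * (γ * f y) + η * b := by
    filter_upwards [hf, eventually_ne_nhds hx] with y hfy hy
    rw [hfy.deriv]
    field_simp
  have drift : HasDerivAt (fun y => y * (γ * f y)) (γ * (f x + b)) x :=
    ((hasDerivAt_id x).mul (hf.self_of_nhds.const_mul γ)).congr_deriv (by
      simp only [id]
      field_simp)
  exact (drift.add_const (η * b)).congr_of_eventuallyEq diffusion_const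

theorem feller_xi4_invariant_solution_general (γ η : ℝ) (hγ : γ ≠ 0) (C₁ C₂ : ℝ) (p : ℝ → ℝ → ℝ)
    (hp : ∀ x t, p x t = (C₁ + C₂ * t + (C₂ / γ) * Real.log x) * Real.exp (γ * t))
    {x : ℝ} (hx : 0 < x) (t : ℝ) :
    HasDerivAt (fun τ => p x τ) (γ * (p x t + C₂ / γ * Real.exp (γ * t))) t ∧
      HasDerivAt (fun y => y * (γ * p y t + η * deriv (fun z => p z t) y))
        (γ * (p x t + C₂ / γ * Real.exp (γ * t))) x := by
  constructor
  · have amplitude : HasDerivAt (fun τ => C₁ + C₂ * τ + C₂ / γ * Real.log x) C₂ t := by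
      simpa using (((hasDerivAt_id t).const_mul C₂).const_add C₁).add_const (C₂ / γ * Real.log x)
    simp only [hp]
    exact (hasDerivAt_mul_exp_const_mul γ amplitude).congr_deriv (by field_simp; ring)
  · refine hasDerivAt_mul_add_deriv_of_hasDerivAt_div γ η hx.ne' ?_
    filter_upwards [eventually_ne_nhds hx.ne'] with y hy
    simp only [hp]
    exact hasDerivAt_const_add_mul_log_mul_const (C₁ + C₂ * t) (C₂ / γ) (Real.exp (γ * t)) hy

/-- The solutions of the Feller equation invariant under the symmetry generator ξ₄:
`p(x,t) = (C₁ + C₂·t + (C₂/γ)·log x)·exp(γ·t)` satisfies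
`∂ₜp = ∂ₓ( x·(γ·p + η·∂ₓp) )` for all `x > 0`, `t ∈ ℝ`. -/
theorem feller_xi4_invariant_solution (γ η : ℝ) (hγ : γ ≠ 0) (hη : 0 < η)
    (C₁ C₂ : ℝ) (p : ℝ → ℝ → ℝ)
    (hp : ∀ x t, p x t =
      (C₁ + C₂ * t + (C₂ / γ) * Real.log x) * Real.exp (γ * t)) :
    ∀ x > 0, ∀ t : ℝ,
      deriv (fun τ => p x τ) t =
        deriv (fun y => y * (γ * p y t + η * deriv (fun z => p z t) y)) x := by
  intro x hx t
  obtain ⟨time, space⟩ := feller_xi4_invariant_solution_general γ η hγ C₁ C₂ p hp hx t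
  exact time.deriv.trans space.deriv.symm
end

section
/- Let γ ∈ ℝ, η > 0 and let I ⊆ ℝ be an open interval. Let P : ℝ → ℝ → ℝ be twice continuously differentiable on (0,∞) × I with ∂ₓP(x,t) > 0 there, and suppose P satisfies ∂ₜP(x,t) = x·( γ·∂ₓP(x,t) + η·∂ₓₓP(x,t) ) for all x > 0, t ∈ I. Let 𝒳 : J × I → (0,∞) (J an open interval of mass values) be differentiable, twice differentiable in its first variable s, and satisfy the inverse relation P(𝒳(s,t), t) = s for all (s,t) ∈ J × I. Then 𝒳 satisfies the Lagrangian equation: for all (s,t) ∈ J × I, ∂ₜ( exp(γ·t)·𝒳(s,t) ) + 𝒳(s,t) · ∂ₛ( η·exp(γ·t) / ∂ₛ𝒳(s,t) ) = 0. -/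
open Set

/-!
Differentiating `P (X s t) t = s` in `s` and in `t` gives `∂ₓP · ∂ₛX = 1` and
`∂ₓP · ∂ₜX + ∂ₜP = 0`. The first identity turns `1 / ∂ₛX` into `∂ₓP (X s t) t`, whose
`s`-derivative is `∂ₓₓP · ∂ₛX`; inserting the equation for `∂ₜP` in the second one and
multiplying by `∂ₛX` gives `∂ₜX = -X (γ + η ∂ₓₓP · ∂ₛX)`. The factor `exp (γ t)` absorbs the term
`-γ X`.
-/

open scoped Topology

section Calculus

variable {𝕜 : Type*} [NontriviallyNormedField 𝕜]

theorem hasDerivAt_along_curve {F : Type*} [NormedAddCommGroup F] [NormedSpace 𝕜 F]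
    {P : 𝕜 → 𝕜 → F} {x : 𝕜 → 𝕜} {x' t : 𝕜}
    (hP : DifferentiableAt 𝕜 (fun q : 𝕜 × 𝕜 => P q.1 q.2) (x t, t)) (hx : HasDerivAt x x' t) :
    HasDerivAt (fun τ => P (x τ) τ)
      (x' • deriv (fun y => P y t) (x t) + deriv (fun τ => P (x t) τ) t) t := by
  set L := fderiv 𝕜 (fun q : 𝕜 × 𝕜 => P q.1 q.2) (x t, t)
  have hL : HasFDerivAt (fun q : 𝕜 × 𝕜 => P q.1 q.2) L (x t, t) := hP.hasFDerivAt
  have hfst : HasDerivAt (fun y => P y t) (L (1, 0)) (x t) :=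
    hL.comp_hasDerivAt (f := fun y => (y, t)) _ ((hasDerivAt_id _).prodMk (hasDerivAt_const _ _))
  have hsnd : HasDerivAt (fun τ => P (x t) τ) (L (0, 1)) t :=
    hL.comp_hasDerivAt (f := fun τ => (x t, τ)) _ ((hasDerivAt_const _ _).prodMk (hasDerivAt_id _))
  have hcurve : HasDerivAt (fun τ => P (x τ) τ) (L (x', 1)) t :=
    hL.comp_hasDerivAt (f := fun τ => (x τ, τ)) _ (hx.prodMk (hasDerivAt_id _))
  have hsplit : ((x', 1) : 𝕜 × 𝕜) = x' • (1, 0) + (0, 1) := by simp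
  rwa [hfst.deriv, hsnd.deriv, ← map_smul, ← map_add, ← hsplit]

theorem deriv_mul_deriv_eq_one_of_eventually_leftInverse {f g : 𝕜 → 𝕜} {a : 𝕜}
    (hf : DifferentiableAt 𝕜 f (g a)) (hg : DifferentiableAt 𝕜 g a)
    (hfg : ∀ᶠ b in 𝓝 a, f (g b) = b) :
    deriv f (g a) * deriv g a = 1 :=
  (hf.hasDerivAt.comp a hg.hasDerivAt).unique ((hasDerivAt_id a).congr_of_eventuallyEq hfg)

theorem hasDerivAt_inv_deriv_of_eventually_leftInverse {f g : 𝕜 → 𝕜} {a : 𝕜}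
    (hf : ∀ᶠ y in 𝓝 (g a), DifferentiableAt 𝕜 f y) (hf' : DifferentiableAt 𝕜 (deriv f) (g a))
    (hg : ∀ᶠ b in 𝓝 a, DifferentiableAt 𝕜 g b) (hfg : ∀ᶠ b in 𝓝 a, f (g b) = b) :
    HasDerivAt (fun b => (deriv g b)⁻¹) (deriv (deriv f) (g a) * deriv g a) a := by
  have hga : DifferentiableAt 𝕜 g a := hg.self_of_nhds
  refine (hf'.hasDerivAt.comp a hga.hasDerivAt).congr_of_eventuallyEq ?_
  filter_upwards [hga.continuousAt.eventually hf, hg, hfg.eventually_nhds] with b hfb hgb hfgb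
  exact inv_eq_of_mul_eq_one_left (deriv_mul_deriv_eq_one_of_eventually_leftInverse hfb hgb hfgb)

theorem differentiableOn_deriv_slice_of_contDiffOn {E F : Type*} [NormedAddCommGroup E]
    [NormedSpace 𝕜 E] [NormedAddCommGroup F] [NormedSpace 𝕜 F] {P : 𝕜 → E → F} {U : Set 𝕜}
    {V : Set E} (hP : ContDiffOn 𝕜 2 (fun q : 𝕜 × E => P q.1 q.2) (U ×ˢ V)) (hU : IsOpen U)
    {t : E} (ht : t ∈ V) :
    DifferentiableOn 𝕜 (deriv fun y => P y t) U := by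
  have hslice : ContDiffOn 𝕜 2 (fun y => P y t) U :=
    hP.comp (contDiff_prodMk_left t).contDiffOn fun _ hy => ⟨hy, ht⟩
  exact (hslice.deriv_of_isOpen (m := 1) hU one_add_one_eq_two.le).differentiableOn one_ne_zero

end Calculus

theorem deriv_exp_mul_mul {γ t : ℝ} {x : ℝ → ℝ} (hx : DifferentiableAt ℝ x t) :
    deriv (fun τ => Real.exp (γ * τ) * x τ) t = Real.exp (γ * t) * (γ * x t + deriv x t) := by
  have hexp : HasDerivAt (fun τ => Real.exp (γ * τ)) (Real.exp (γ * t) * (γ * 1)) t :=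
    ((hasDerivAt_id t).const_mul γ).exp
  rw [deriv_fun_mul hexp.differentiableAt hx, hexp.deriv]
  ring

theorem feller_lagrangian_equation_general (γ η : ℝ) {U I J : Set ℝ}
    (hU : IsOpen U) (hI : IsOpen I) (hJ : IsOpen J) {P : ℝ → ℝ → ℝ}
    (hP : DifferentiableOn ℝ (fun q : ℝ × ℝ => P q.1 q.2) (U ×ˢ I))
    (hPx : ∀ t ∈ I, DifferentiableOn ℝ (deriv fun y => P y t) U)
    (hPeq : ∀ x ∈ U, ∀ t ∈ I,
      deriv (fun τ => P x τ) t =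
        x * (γ * deriv (fun y => P y t) x + η * deriv (deriv fun y => P y t) x))
    {X : ℝ → ℝ → ℝ} (hXU : ∀ s ∈ J, ∀ t ∈ I, X s t ∈ U)
    (hXdt : ∀ s ∈ J, ∀ t ∈ I, DifferentiableAt ℝ (fun τ => X s τ) t)
    (hXds : ∀ s ∈ J, ∀ t ∈ I, DifferentiableAt ℝ (fun σ => X σ t) s)
    (hinv : ∀ s ∈ J, ∀ t ∈ I, P (X s t) t = s) :
    ∀ s ∈ J, ∀ t ∈ I,
      deriv (fun τ => Real.exp (γ * τ) * X s τ) t +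
        X s t * deriv (fun σ => η * Real.exp (γ * t) / deriv (fun σ' => X σ' t) σ) s = 0 := by
  intro s hs t ht
  have hx : X s t ∈ U := hXU s hs t ht
  have hslice : DifferentiableOn ℝ (fun y => P y t) U :=
    hP.comp (fun y _ => (hasFDerivAt_prodMk_left y t).differentiableAt.differentiableWithinAt)
      fun _ hy => ⟨hy, ht⟩
  have hinv_s : ∀ᶠ σ in 𝓝 s, P (X σ t) t = σ :=
    (hJ.eventually_mem hs).mono fun σ hσ => hinv σ hσ t ht
  have hinv_t : ∀ᶠ τ in 𝓝 t, P (X s τ) τ = s := (hI.eventually_mem ht).mono (hinv s hs)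
  have hPx_Xs : deriv (fun y => P y t) (X s t) * deriv (fun σ => X σ t) s = 1 :=
    deriv_mul_deriv_eq_one_of_eventually_leftInverse (f := fun y => P y t) (g := fun σ => X σ t)
      (hslice.differentiableAt (hU.mem_nhds hx)) (hXds s hs t ht) hinv_s
  have hXt : deriv (fun τ => X s τ) t * deriv (fun y => P y t) (X s t) +
      deriv (fun τ => P (X s t) τ) t = 0 :=
    (hasDerivAt_along_curve (hP.differentiableAt ((hU.prod hI).mem_nhds ⟨hx, ht⟩))
      (hXdt s hs t ht).hasDerivAt).unique ((hasDerivAt_const t s).congr_of_eventuallyEq hinv_t)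
  have hinvXs : HasDerivAt (fun σ => (deriv (fun σ' => X σ' t) σ)⁻¹)
      (deriv (deriv fun y => P y t) (X s t) * deriv (fun σ => X σ t) s) s :=
    hasDerivAt_inv_deriv_of_eventually_leftInverse (f := fun y => P y t) (g := fun σ => X σ t)
      (hslice.eventually_differentiableAt (hU.mem_nhds hx))
      ((hPx t ht).differentiableAt (hU.mem_nhds hx))
      ((hJ.eventually_mem hs).mono fun σ hσ => hXds σ hσ t ht) hinv_s
  rw [hPeq _ hx t ht] at hXt
  simp only [div_eq_mul_inv]
  rw [deriv_exp_mul_mul (hXdt s hs t ht), (hinvXs.const_mul _).deriv]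
  linear_combination Real.exp (γ * t) * deriv (fun σ => X σ t) s * hXt -
    Real.exp (γ * t) * (deriv (fun τ => X s τ) t + γ * X s t) * hPx_Xs

/-- Lagrangian (material) reformulation of the Feller equation: if `P` satisfies the
integrated equation `∂ₜP = x·(γ·∂ₓP + η·∂ₓₓP)` on `(0,∞) × I` with `∂ₓP > 0`, and
`𝒳 : J × I → (0,∞)` is its pseudo-inverse in the first variable
(`P(𝒳(s,t), t) = s`), then `𝒳` satisfies
`∂ₜ( e^{γt}·𝒳 ) + 𝒳·∂ₛ( η·e^{γt}/∂ₛ𝒳 ) = 0` on `J × I`. -/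
theorem feller_lagrangian_equation (γ η : ℝ) (hη : 0 < η)
    (I J : Set ℝ) (hI : IsOpen I) (hI' : I.OrdConnected)
    (hJ : IsOpen J) (hJ' : J.OrdConnected)
    (P : ℝ → ℝ → ℝ)
    (hreg : ContDiffOn ℝ 2 (fun q : ℝ × ℝ => P q.1 q.2) (Ioi 0 ×ˢ I))
    (hPx_pos : ∀ x > 0, ∀ t ∈ I, 0 < deriv (fun y => P y t) x)
    (hPeq : ∀ x > 0, ∀ t ∈ I,
      deriv (fun τ => P x τ) t =
        x * (γ * deriv (fun y => P y t) x
              + η * deriv (deriv fun y => P y t) x))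
    (X : ℝ → ℝ → ℝ)
    (hXpos : ∀ s ∈ J, ∀ t ∈ I, 0 < X s t)
    (hXdt : ∀ s ∈ J, ∀ t ∈ I, DifferentiableAt ℝ (fun τ => X s τ) t)
    (hXds : ∀ s ∈ J, ∀ t ∈ I, DifferentiableAt ℝ (fun σ => X σ t) s)
    (hXdss : ∀ s ∈ J, ∀ t ∈ I, DifferentiableAt ℝ (deriv fun σ => X σ t) s)
    (hinv : ∀ s ∈ J, ∀ t ∈ I, P (X s t) t = s) :
    ∀ s ∈ J, ∀ t ∈ I,
      deriv (fun τ => Real.exp (γ * τ) * X s τ) t +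
        X s t *
          deriv (fun σ => η * Real.exp (γ * t) / deriv (fun σ' => X σ' t) σ) s
      = 0 := by
  exact feller_lagrangian_equation_general γ η isOpen_Ioi hI hJ (hreg.differentiableOn two_ne_zero)
    (fun _ => differentiableOn_deriv_slice_of_contDiffOn hreg isOpen_Ioi) hPeq hXpos hXdt hXds hinv
end
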